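/- arXiv:1501.06206 — 3 statements merged into one kernel-verified Lean document; each statement's English description precedes it below -/
import Mathlib

section
/- Let W be a type of (abductive) interpretations, S ⊆ W, and M ⊆ W nonempty. An operator rev : Set W → Set W satisfies the revision postulates — for all A, B ⊆ W: rev A ⊆ A ∩ S; A ∩ S ≠ ∅ if and only if rev A ≠ ∅; if M ∩ A ≠ ∅ then rev A = M ∩ A; (rev A) ∩ B ⊆ rev(A ∩ B); and if (rev A) ∩ B ≠ ∅ then rev(A ∩ B) ⊆ (rev A) ∩ B — if and only if there exists a reflexive transitive relation ≼ on W that is total on S, has the minimality property on S (every nonempty F ⊆ S contains a ≼-minimal element of F), satisfies Min(S, ≼) = M, and represents rev, i.e. rev A = Min(A ∩ S, ≼) for all A ⊆ W. -/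
/-!
Given an operator `rev` satisfying the postulates, the order is recovered from revision by pairs:
`x ≼ y` iff `x = y`, or `y ∈ S` and `x ∈ rev {x, y}`. The postulates on `rev (A ∩ B)` make `rev`
a rational choice function, so that `rev A` consists of the elements of `A ∩ S` that are chosen
from every pair `{x, y}` with `y ∈ A ∩ S` (`mem_rev_pair`, `mem_rev_of_pair`). Since `≼` is total
on `S`, these are the minimal elements of `A ∩ S`. Transitivity follows by applying `rev` to a
triple, and `Min(S) = M` by applying `rev` to the set of all interpretations.

Conversely, for a transitive relation total on `S`, minimization satisfies both postulates on
`A ∩ B` (`minSet_inter_subset`, `minSet_subset_inter`), and the postulate on `M ∩ A` is their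
instance for the ambient set `S`, as `M = Min(S)`.
-/

/-- The set of `r`-minimal elements of `A`. -/
def minSet {W : Type*} (A : Set W) (r : W → W → Prop) : Set W :=
  {x ∈ A | ∀ y ∈ A, ¬ (r y x ∧ ¬ r x y)}

/-- The revealed preference of `rev`: besides equality, `x` is below `y ∈ S` when `x` is chosen
from the pair `{x, y}`. Equality is added to obtain reflexivity outside `S`. -/
def revealedLE {W : Type*} (S : Set W) (rev : Set W → Set W) (x y : W) : Prop :=
  x = y ∨ (y ∈ S ∧ x ∈ rev {x, y})

theorem mem_rev_pair {W : Type*} {rev : Set W → Set W}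
    (h4 : ∀ A B : Set W, rev A ∩ B ⊆ rev (A ∩ B)) {A : Set W} {x y : W}
    (hxA : x ∈ A) (hx : x ∈ rev A) (hy : y ∈ A) : x ∈ rev {x, y} := by
  have h : x ∈ rev (A ∩ {x, y}) := h4 A {x, y} ⟨hx, by simp⟩
  rwa [Set.inter_eq_self_of_subset_right (Set.pair_subset hxA hy)] at h

/-- An element chosen from its pair with some element of `rev A` is itself in `rev A`. -/
theorem mem_rev_of_pair {W : Type*} {rev : Set W → Set W}
    (h5 : ∀ A B : Set W, rev A ∩ B ≠ ∅ → rev (A ∩ B) ⊆ rev A ∩ B) {A : Set W} {x z : W}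
    (hxA : x ∈ A) (hzA : z ∈ A) (hz : z ∈ rev A) (hx : x ∈ rev {x, z}) : x ∈ rev A := by
  have hne : rev A ∩ {x, z} ≠ ∅ := Set.Nonempty.ne_empty ⟨z, hz, by simp⟩
  have h := h5 A {x, z} hne
  rw [Set.inter_eq_self_of_subset_right (Set.pair_subset hxA hzA)] at h
  exact (h hx).1

theorem minSet_inter_subset {W : Type*} (F B : Set W) (le : W → W → Prop) :
    minSet F le ∩ B ⊆ minSet (F ∩ B) le :=
  fun _ ⟨⟨hxF, hx⟩, hxB⟩ => ⟨⟨hxF, hxB⟩, fun y hy => hx y hy.1⟩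

theorem minSet_subset_inter {W : Type*} {F B : Set W} {le : W → W → Prop}
    (htr : Transitive le) (htot : ∀ x ∈ F, ∀ y ∈ F, le x y ∨ le y x)
    (hne : (minSet F le ∩ B).Nonempty) :
    minSet (F ∩ B) le ⊆ minSet F le ∩ B := by
  obtain ⟨z, ⟨hzF, hz⟩, hzB⟩ := hne
  rintro x ⟨⟨hxF, hxB⟩, hx⟩
  have hxz : le x z := by
    by_contra hn
    exact hx z ⟨hzF, hzB⟩ ⟨(htot x hxF z hzF).resolve_left hn, hn⟩
  -- Anything strictly below `x` would be strictly below the `F`-minimal element `z`.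
  exact ⟨⟨hxF, fun y hy ⟨hyx, hxy⟩ =>
    hz y hy ⟨htr hyx hxz, fun hzy => hxy (htr hxz hzy)⟩⟩, hxB⟩

/-- representation theorem: an operator satisfies the revision postulates
iff it is generated by minimization under a faithful order satisfying the
rationality axioms. -/
theorem revision_representation {W : Type*} (S M : Set W) (hM : M.Nonempty)
    (rev : Set W → Set W) :
    ((∀ A : Set W, rev A ⊆ A ∩ S) ∧
     (∀ A : Set W, A ∩ S ≠ ∅ ↔ rev A ≠ ∅) ∧
     (∀ A : Set W, M ∩ A ≠ ∅ → rev A = M ∩ A) ∧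
     (∀ A B : Set W, rev A ∩ B ⊆ rev (A ∩ B)) ∧
     (∀ A B : Set W, rev A ∩ B ≠ ∅ → rev (A ∩ B) ⊆ rev A ∩ B)) ↔
    (∃ le : W → W → Prop,
      Reflexive le ∧ Transitive le ∧
      (∀ x ∈ S, ∀ y ∈ S, le x y ∨ le y x) ∧
      (∀ F : Set W, F ⊆ S → F.Nonempty → (minSet F le).Nonempty) ∧
      minSet S le = M ∧
      (∀ A : Set W, rev A = minSet (A ∩ S) le)) := by
  constructor
  · rintro ⟨h1, h2, h3, h4, h5⟩
    have hself : ∀ x ∈ S, x ∈ rev {x, x} := by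
      intro x hx
      obtain ⟨z, hz⟩ := Set.nonempty_iff_ne_empty.2
        ((h2 {x, x}).1 (Set.Nonempty.ne_empty ⟨x, by simp, hx⟩))
      have hzx : z = x := by simpa using (h1 _ hz).1
      rwa [hzx] at hz
    have hpair : ∀ x y, y ∈ S → revealedLE S rev x y → x ∈ rev {x, y} := by
      rintro x y hy (rfl | h)
      · exact hself x hy
      · exact h.2
    have htot : ∀ x ∈ S, ∀ y ∈ S, revealedLE S rev x y ∨ revealedLE S rev y x := by
      intro x hx y hy
      obtain ⟨z, hz⟩ := Set.nonempty_iff_ne_empty.2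
        ((h2 {x, y}).1 (Set.Nonempty.ne_empty ⟨x, by simp, hx⟩))
      rcases (h1 _ hz).1 with rfl | hzy
      · exact Or.inl (Or.inr ⟨hy, hz⟩)
      · obtain rfl : z = y := hzy
        exact Or.inr (Or.inr ⟨hx, by rwa [Set.pair_comm]⟩)
    have hrep : ∀ A : Set W, rev A = minSet (A ∩ S) (revealedLE S rev) := by
      intro A
      ext x
      constructor
      · intro hx
        have hxA := h1 A hx
        exact ⟨hxA, fun y hy hlt =>
          hlt.2 (Or.inr ⟨hy.2, mem_rev_pair h4 hxA.1 hx hy.1⟩)⟩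
      · rintro ⟨hxA, hmin⟩
        obtain ⟨z, hz⟩ := Set.nonempty_iff_ne_empty.2
          ((h2 A).1 (Set.Nonempty.ne_empty ⟨x, hxA⟩))
        have hzA := h1 A hz
        have hxz : revealedLE S rev x z := by
          by_contra hn
          exact hmin z hzA ⟨(htot x hxA.2 z hzA.2).resolve_left hn, hn⟩
        exact mem_rev_of_pair h5 hxA.1 hzA.1 hz (hpair x z hzA.2 hxz)
    refine ⟨revealedLE S rev, fun x => Or.inl rfl, ?_, htot, ?_, ?_, hrep⟩
    · rintro x y z (rfl | ⟨hyS, hxy⟩) (rfl | ⟨hzS, hyz⟩)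
      · exact Or.inl rfl
      · exact Or.inr ⟨hzS, hyz⟩
      · exact Or.inr ⟨hyS, hxy⟩
      · refine Or.inr ⟨hzS, ?_⟩
        have hxT : x ∈ ({x, y, z} : Set W) := by simp
        have hyT : y ∈ ({x, y, z} : Set W) := by simp
        have hzT : z ∈ ({x, y, z} : Set W) := by simp
        obtain ⟨w, hw⟩ := Set.nonempty_iff_ne_empty.2
          ((h2 {x, y, z}).1 (Set.Nonempty.ne_empty ⟨z, hzT, hzS⟩))
        -- Membership in the choice from the triple propagates from `z` to `y` and from `y` to `x`.
        have hyx : y ∈ rev {x, y, z} → x ∈ rev {x, y, z} :=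
          fun h => mem_rev_of_pair h5 hxT hyT h hxy
        have hzy : z ∈ rev {x, y, z} → y ∈ rev {x, y, z} :=
          fun h => mem_rev_of_pair h5 hyT hzT h hyz
        have hx : x ∈ rev {x, y, z} := by
          have hwT : w = x ∨ w = y ∨ w = z := (h1 _ hw).1
          rcases hwT with hwx | hwy | hwz
          · exact hwx ▸ hw
          · exact hyx (hwy ▸ hw)
          · exact hyx (hzy (hwz ▸ hw))
        exact mem_rev_pair h4 hxT hx hzT
    · intro F hF hne
      have h := hrep F
      rw [Set.inter_eq_self_of_subset_left hF] at h
      rw [← h, Set.nonempty_iff_ne_empty, ← h2, Set.inter_eq_self_of_subset_left hF]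
      exact hne.ne_empty
    · have h := hrep Set.univ
      rw [Set.univ_inter] at h
      rw [← h, h3 Set.univ (by simpa using hM.ne_empty), Set.inter_univ]
  · rintro ⟨le, -, htr, htot, hmin, rfl, hrep⟩
    refine ⟨?_, ?_, ?_, ?_, ?_⟩
    · intro A
      rw [hrep]
      exact fun x hx => hx.1
    · intro A
      rw [hrep, ← Set.nonempty_iff_ne_empty, ← Set.nonempty_iff_ne_empty]
      exact ⟨hmin _ Set.inter_subset_right, fun ⟨x, hx⟩ => ⟨x, hx.1⟩⟩
    · intro A hA
      rw [hrep, Set.inter_comm A S]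
      exact Set.Subset.antisymm
        (minSet_subset_inter htr htot (Set.nonempty_iff_ne_empty.2 hA))
        (minSet_inter_subset S A le)
    · intro A B
      rw [hrep, hrep, Set.inter_right_comm]
      exact minSet_inter_subset _ B le
    · intro A B hAB
      rw [hrep] at hAB
      rw [hrep, hrep, Set.inter_right_comm]
      exact minSet_subset_inter htr (fun x hx y hy => htot x hx.2 y hy.2)
        (Set.nonempty_iff_ne_empty.2 hAB)
end

section
/- Let W be a type of (abductive) interpretations, let S ⊆ W, and let ≼ be a reflexive transitive relation on W that is total on S (for all x, y ∈ S, x ≼ y or y ≼ x) and has the minimality property on S (every nonempty F ⊆ S contains a ≼-minimal element of F), and set M := Min(S, ≼). Define the contraction operator con : Set W → Set W by con A := M ∪ Min(Aᶜ ∩ S, ≼), where Aᶜ is the complement of A in W. Then con satisfies the contraction postulates, for all A, B ⊆ W: (closure) con A ⊆ S; (success) if S \ A ≠ ∅ then (con A) \ A ≠ ∅; (inclusion) M ⊆ con A; (vacuity) if ¬(M ⊆ A) then con A = M; (recovery) (con A) ∩ A ⊆ M; (conjunction 1) con(A ∩ B) ⊆ (con A) ∪ (con B); (conjunction 2) if ¬(con(A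 ∩ B) ⊆ A) then con A ⊆ con(A ∩ B). -/
/-- Since `le` is total on `S`, an element of `F` minimal in the larger set `G` lies below all of
`G`, and every minimal element of `F` lies below it, hence below all of `G`. -/
theorem minSet_subset_of_mem {W : Type*} {S F G : Set W} {le : W → W → Prop}
    (htrans : Transitive le) (htotal : ∀ x ∈ S, ∀ y ∈ S, le x y ∨ le y x)
    (hFG : F ⊆ G) (hGS : G ⊆ S) {x : W} (hxF : x ∈ F) (hxG : x ∈ minSet G le) :
    minSet F le ⊆ minSet G le := by
  rintro y ⟨hyF, hy⟩
  refine ⟨hFG hyF, fun z hz ⟨_, hyz⟩ => hyz ?_⟩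
  have hyx : le y x := by
    by_contra h
    exact hy x hxF ⟨(htotal x (hGS hxG.1) y (hGS (hFG hyF))).resolve_right h, h⟩
  have hxz : le x z := by
    by_contra h
    exact hxG.2 z hz ⟨(htotal x (hGS hxG.1) z (hGS hz)).resolve_left h, h⟩
  exact htrans hyx hxz

/-- contraction constructed by `con A := M ∪ Min(Aᶜ ∩ S, ≼)` from a
rational order, with `M := Min(S, ≼)`, satisfies the contraction postulates. -/
theorem contraction_from_order {W : Type*} (S : Set W) (le : W → W → Prop)
    (hrefl : Reflexive le) (htrans : Transitive le)
    (htotal : ∀ x ∈ S, ∀ y ∈ S, le x y ∨ le y x)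
    (hminimality : ∀ F : Set W, F ⊆ S → F.Nonempty → (minSet F le).Nonempty)
    (M : Set W) (hM : M = minSet S le)
    (con : Set W → Set W)
    (hcon : ∀ A : Set W, con A = M ∪ minSet (Aᶜ ∩ S) le) :
    (∀ A : Set W, con A ⊆ S) ∧
    (∀ A : Set W, (S \ A) ≠ ∅ → (con A \ A) ≠ ∅) ∧
    (∀ A : Set W, M ⊆ con A) ∧
    (∀ A : Set W, ¬ (M ⊆ A) → con A = M) ∧
    (∀ A : Set W, con A ∩ A ⊆ M) ∧
    (∀ A B : Set W, con (A ∩ B) ⊆ con A ∪ con B) ∧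
    (∀ A B : Set W, ¬ (con (A ∩ B) ⊆ A) → con A ⊆ con (A ∩ B)) := by
  have hvac : ∀ A : Set W, ¬ (M ⊆ A) → con A = M := by
    intro A h
    obtain ⟨x, hxM, hxA⟩ := Set.not_subset.1 h
    subst hM
    rw [hcon, Set.union_eq_left]
    exact minSet_subset_of_mem htrans htotal Set.inter_subset_right subset_rfl
      ⟨hxA, hxM.1⟩ hxM
  have hincl : ∀ A : Set W, M ⊆ con A := fun A => hcon A ▸ Set.subset_union_left
  refine ⟨fun A x hx => ?_, fun A hA => ?_, hincl, hvac, ?_, ?_, ?_⟩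
  · rw [hcon, hM] at hx
    exact hx.elim (fun h => h.1) (fun h => h.1.2)
  · obtain ⟨x, hxS, hxA⟩ := Set.nonempty_iff_ne_empty.2 hA
    obtain ⟨y, hy⟩ := hminimality (Aᶜ ∩ S) Set.inter_subset_right ⟨x, hxA, hxS⟩
    exact Set.nonempty_iff_ne_empty.1 ⟨y, hcon A ▸ Or.inr hy, hy.1.1⟩
  · rintro A x ⟨hx, hxA⟩
    rw [hcon] at hx
    exact hx.resolve_right fun h => h.1.1 hxA
  · intro A B x hx
    rw [hcon] at hx
    rw [hcon, hcon]
    rcases hx with hx | ⟨⟨hxAB, hxS⟩, hmin⟩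
    · exact Or.inl (Or.inl hx)
    · by_cases hxA : x ∈ A
      · exact Or.inr (Or.inr ⟨⟨fun hxB => hxAB ⟨hxA, hxB⟩, hxS⟩,
          fun y hy => hmin y ⟨fun h => hy.1 h.2, hy.2⟩⟩)
      · exact Or.inl (Or.inr ⟨⟨hxA, hxS⟩, fun y hy => hmin y ⟨fun h => hy.1 h.1, hy.2⟩⟩)
  · intro A B h
    obtain ⟨x, hx, hxA⟩ := Set.not_subset.1 h
    rw [hcon] at hx
    rcases hx with hx | hx
    · rw [hvac A fun hMA => hxA (hMA hx)]
      exact hincl _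
    · rw [hcon, hcon]
      refine Set.union_subset_union_right M ?_
      exact minSet_subset_of_mem htrans htotal (fun y hy => ⟨fun h => hy.1 h.1, hy.2⟩)
        Set.inter_subset_right ⟨hxA, hx.1.2⟩ hx
end

section
/- Let W be a type of (abductive) interpretations, S ⊆ W, and M ⊆ W nonempty, and let con : Set W → Set W satisfy the contraction postulates, for all A, B ⊆ W: (closure) con A ⊆ S; (success) if S \ A ≠ ∅ then (con A) \ A ≠ ∅; (inclusion) M ⊆ con A; (vacuity) if ¬(M ⊆ A) then con A = M; (recovery) (con A) ∩ A ⊆ M; (conjunction 1) con(A ∩ B) ⊆ (con A) ∪ (con B); (conjunction 2) if ¬(con(A ∩ B) ⊆ A) then con A ⊆ con(A ∩ B). Then there exists a reflexive transitive relation ≼ on W that is total on S, has the minimality property on S (every nonempty F ⊆ S contains a ≼-minimal element of F), satisfies Min(S, ≼) = M, and represents con, i.e. con A = M ∪ Min(Aᶜ ∩ S, ≼) for all A ⊆ W, where Aᶜ is the complement of A in W. -/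
/-- The preorder revealed on pairs by a choice function `c`; points outside `S` lie above
everything. -/
def revealed {W : Type*} (S : Set W) (c : Set W → Set W) (x y : W) : Prop :=
  x ∈ c {x, y} ∨ y ∉ S

section Choice

variable {W : Type*} {S : Set W} {c : Set W → Set W}

theorem revealed_refl (hsub : ∀ F, c F ⊆ F)
    (hne : ∀ F, (F ∩ S).Nonempty → (c F).Nonempty) (x : W) : revealed S c x x := by
  by_cases hx : x ∈ S
  · obtain ⟨z, hz⟩ := hne {x, x} ⟨x, by simp, hx⟩
    have hzx : z = x := by simpa using hsub _ hz
    exact Or.inl (hzx ▸ hz)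
  · exact Or.inr hx

/-- The choice from `{x, y, z}` is nonempty, and by `hbeta` it propagates down the chain to `x`. -/
theorem revealed_trans (hsub : ∀ F, c F ⊆ F) (hS : ∀ F, c F ⊆ S)
    (hne : ∀ F, (F ∩ S).Nonempty → (c F).Nonempty)
    (halpha : ∀ F H, F ⊆ H → c H ∩ F ⊆ c F)
    (hbeta : ∀ F H, F ⊆ H → (c H ∩ F).Nonempty → c F ⊆ c H)
    {x y z : W} (hxy : revealed S c x y) (hyz : revealed S c y z) : revealed S c x z := by
  rcases hyz with hyz | hz
  · have hxy : x ∈ c {x, y} := hxy.resolve_right fun h => h (hS _ hyz)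
    have hy : y ∈ c {x, y, z} → x ∈ c {x, y, z} := fun h =>
      hbeta {x, y} {x, y, z} (by grind) ⟨y, h, by simp⟩ hxy
    have hz : z ∈ c {x, y, z} → y ∈ c {x, y, z} := fun h =>
      hbeta {y, z} {x, y, z} (by grind) ⟨z, h, by simp⟩ hyz
    have hx : x ∈ c {x, y, z} := by
      obtain ⟨w, hw⟩ := hne {x, y, z} ⟨x, by simp, hS _ hxy⟩
      rcases hsub _ hw with rfl | rfl | rfl
      · exact hw
      · exact hy hw
      · exact hy (hz hw)
    exact Or.inl (halpha {x, z} {x, y, z} (by grind) ⟨hx, by simp⟩)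
  · exact Or.inr hz

theorem minSet_revealed (hsub : ∀ F, c F ⊆ F) (hS : ∀ F, c F ⊆ S)
    (hne : ∀ F, (F ∩ S).Nonempty → (c F).Nonempty)
    (halpha : ∀ F H, F ⊆ H → c H ∩ F ⊆ c F)
    (hbeta : ∀ F H, F ⊆ H → (c H ∩ F).Nonempty → c F ⊆ c H) (F : Set W) :
    minSet (F ∩ S) (revealed S c) = c F := by
  have hpair : ∀ x ∈ c F, ∀ y ∈ F, revealed S c x y := fun x hx y hy =>
    Or.inl (halpha {x, y} F (Set.pair_subset (hsub _ hx) hy) ⟨hx, by simp⟩)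
  ext x
  constructor
  · rintro ⟨⟨hxF, hxS⟩, hmin⟩
    obtain ⟨y, hy⟩ := hne F ⟨x, hxF, hxS⟩
    have hxy : revealed S c x y := by
      by_contra h
      exact hmin y ⟨hsub _ hy, hS _ hy⟩ ⟨hpair y hy x hxF, h⟩
    exact hbeta {x, y} F (Set.pair_subset hxF (hsub _ hy)) ⟨y, hy, by simp⟩
      (hxy.resolve_right fun h => h (hS _ hy))
  · exact fun hx => ⟨⟨hsub _ hx, hS _ hx⟩, fun y hy h => h.2 (hpair x hx y hy.1)⟩

end Choice

/-- every operator satisfying the contraction postulates is generated by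
`con A = M ∪ Min(Aᶜ ∩ S, ≼)` for some faithful rational order `≼`. -/
theorem order_from_contraction {W : Type*} (S M : Set W) (hM : M.Nonempty)
    (con : Set W → Set W)
    (closure : ∀ A : Set W, con A ⊆ S)
    (success : ∀ A : Set W, (S \ A) ≠ ∅ → (con A \ A) ≠ ∅)
    (inclusion : ∀ A : Set W, M ⊆ con A)
    (vacuity : ∀ A : Set W, ¬ (M ⊆ A) → con A = M)
    (recovery : ∀ A : Set W, con A ∩ A ⊆ M)
    (conj1 : ∀ A B : Set W, con (A ∩ B) ⊆ con A ∪ con B)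
    (conj2 : ∀ A B : Set W, ¬ (con (A ∩ B) ⊆ A) → con A ⊆ con (A ∩ B)) :
    ∃ le : W → W → Prop,
      Reflexive le ∧ Transitive le ∧
      (∀ x ∈ S, ∀ y ∈ S, le x y ∨ le y x) ∧
      (∀ F : Set W, F ⊆ S → F.Nonempty → (minSet F le).Nonempty) ∧
      minSet S le = M ∧
      (∀ A : Set W, con A = M ∪ minSet (Aᶜ ∩ S) le) := by
  let c : Set W → Set W := fun F => con Fᶜ ∩ F
  have hsub : ∀ F, c F ⊆ F := fun F => Set.inter_subset_right
  have hS : ∀ F, c F ⊆ S := fun F x hx => closure _ hx.1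
  have hne : ∀ F, (F ∩ S).Nonempty → (c F).Nonempty := by
    rintro F ⟨x, hxF, hxS⟩
    have h := success Fᶜ (Set.Nonempty.ne_empty ⟨x, hxS, fun h => h hxF⟩)
    rwa [← Set.nonempty_iff_ne_empty, Set.sdiff_compl] at h
  have halpha : ∀ F H, F ⊆ H → c H ∩ F ⊆ c F := by
    rintro F H hFH x ⟨⟨hx, -⟩, hxF⟩
    refine ⟨?_, hxF⟩
    -- Splitting `H` into the disjoint parts `F` and `H \ F` lets recovery apply to the second.
    have hsplit : Hᶜ = Fᶜ ∩ (H \ F)ᶜ := by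
      ext w
      have := @hFH w
      simp only [Set.mem_compl_iff, Set.mem_inter_iff, Set.mem_sdiff]
      tauto
    rw [hsplit] at hx
    rcases conj1 _ _ hx with h | h
    · exact h
    · exact inclusion _ (recovery _ ⟨h, fun h' => h'.2 hxF⟩)
  have hbeta : ∀ F H, F ⊆ H → (c H ∩ F).Nonempty → c F ⊆ c H := by
    rintro F H hFH ⟨y, ⟨hy, -⟩, hyF⟩ x ⟨hx, hxF⟩
    have hinter : Fᶜ ∩ Hᶜ = Hᶜ :=
      Set.inter_eq_right.2 (Set.compl_subset_compl.2 hFH)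
    have h := conj2 Fᶜ Hᶜ
    rw [hinter] at h
    exact ⟨h (fun h' => h' hy hyF) hx, hFH hxF⟩
  have hmin := minSet_revealed hsub hS hne halpha hbeta
  have hMS : M ⊆ S := (inclusion ∅).trans (closure ∅)
  refine ⟨revealed S c, revealed_refl hsub hne,
    fun _ _ _ => revealed_trans hsub hS hne halpha hbeta, ?_, ?_, ?_, ?_⟩
  · intro x hx y hy
    obtain ⟨z, hz⟩ := hne {x, y} ⟨x, by simp, hx⟩
    rcases hsub _ hz with rfl | rfl
    · exact Or.inl (Or.inl hz)
    · exact Or.inr (Or.inl (Set.pair_comm x z ▸ hz))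
  · intro F hF hFne
    have h := hmin F
    rw [Set.inter_eq_left.2 hF] at h
    rw [h]
    exact hne F (by rwa [Set.inter_eq_left.2 hF])
  · have h := hmin S
    rw [Set.inter_self] at h
    rw [h]
    obtain ⟨m, hm⟩ := hM
    change con Sᶜ ∩ S = M
    rw [vacuity Sᶜ fun h' => h' hm (hMS hm), Set.inter_eq_left.2 hMS]
  · intro A
    rw [hmin]
    change con A = M ∪ con Aᶜᶜ ∩ Aᶜ
    rw [compl_compl]
    ext x
    constructor
    · intro hx
      by_cases hxA : x ∈ A
      · exact Or.inl (recovery A ⟨hx, hxA⟩)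
      · exact Or.inr ⟨hx, hxA⟩
    · rintro (hx | hx)
      · exact inclusion A hx
      · exact hx.1
end
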